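/- arXiv:2507.08356 — 2 statements merged into one kernel-verified Lean document; each statement's English description precedes it below -/
import Mathlib

section
/- The loop closure condition of the Bennett mechanism holds: T(a₁)·R(t₁₂)·T(a₂)·R(t₂₃)·T(a₁)·R(−t₁₂)·T(a₂)·R(−t₂₃) = I₄, where t₁₂ = (a₁ + a₂)/((a₁ − a₂)·t₂₃) and the 4×4 matrices R, T are the Denavit–Hartenberg transformation matrices with d_i = k·sin(α_i) and zero offsets (expressed rationally via half-angle substitution). -/
/-! The inverse of `dhR t` is `dhR (-t)` and that of `dhT k a` is `dhT k (-a)`, so, writing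
`u = (a₁ + a₂) / ((a₁ - a₂) * t₂₃)`, closure of the loop is equivalent to the half-loop identity
`T(a₁) R(u) T(a₂) R(t₂₃) = R(t₂₃) T(-a₂) R(u) T(-a₁)` (`half_loop`).
On rotation parts this identity has a transparent meaning. The left side is the rotation with
quaternion `q = (1 + a₁ k)(1 - u i)(1 + a₂ k)(1 - t₂₃ i)`, and the right side is obtained from it
by reversing the order of the factors and changing the sign of `k`, an anti-automorphism fixing
`1`, `i`, `j` and negating `k`. So the identity holds as soon as the `k`-component
`a₁ + a₂ - u t₂₃ (a₁ - a₂)` of `q` vanishes, and that is the transmission relation. The translation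
parts, and the matrix form of the above, are checked entrywise as identities of rational
functions. -/

open Matrix

/-- Denavit–Hartenberg rotation matrix `R(θ)` expressed rationally via the
half-angle substitution `t = tan(θ/2)`. -/
noncomputable def dhR (t : ℝ) : Matrix (Fin 4) (Fin 4) ℝ :=
  !![1, 0, 0, 0;
     0, 1, 0, 0;
     0, 0, (1 - t ^ 2) / (1 + t ^ 2), 2 * t / (1 + t ^ 2);
     0, 0, -(2 * t / (1 + t ^ 2)), (1 - t ^ 2) / (1 + t ^ 2)]

/-- Denavit–Hartenberg transformation matrix `T(α)` with `d = k·sin α` and zero offset,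
expressed rationally via the half-angle substitution `a = tan(α/2)`. -/
noncomputable def dhT (k a : ℝ) : Matrix (Fin 4) (Fin 4) ℝ :=
  !![1, 0, 0, 0;
     0, (1 - a ^ 2) / (1 + a ^ 2), -(2 * a / (1 + a ^ 2)), 0;
     0, 2 * a / (1 + a ^ 2), (1 - a ^ 2) / (1 + a ^ 2), 0;
     k * (2 * a / (1 + a ^ 2)), 0, 0, 1]

theorem dhR_mul_dhR_neg (t : ℝ) : dhR t * dhR (-t) = 1 := by
  have h : 1 + t ^ 2 ≠ 0 := by positivity
  ext i j
  fin_cases i <;> fin_cases j <;> simp [dhR, Matrix.mul_apply, Fin.sum_univ_four] <;>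
    field_simp <;> ring

theorem dhT_neg_mul_dhT (k a : ℝ) : dhT k (-a) * dhT k a = 1 := by
  have h : 1 + a ^ 2 ≠ 0 := by positivity
  ext i j
  fin_cases i <;> fin_cases j <;> simp [dhT, Matrix.mul_apply, Fin.sum_univ_four] <;>
    field_simp <;> ring

/-- The first half of the loop equals the inverse of the second half. -/
theorem half_loop (k a b t : ℝ) (hab : a ≠ b) (ht : t ≠ 0) :
    dhT k a * dhR ((a + b) / ((a - b) * t)) * dhT k b * dhR t =
      dhR t * dhT k (-b) * dhR ((a + b) / ((a - b) * t)) * dhT k (-a) := by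
  have hab' : a - b ≠ 0 := sub_ne_zero.mpr hab
  have h1 : 1 + a ^ 2 ≠ 0 := by positivity
  have h2 : 1 + b ^ 2 ≠ 0 := by positivity
  have h3 : 1 + t ^ 2 ≠ 0 := by positivity
  have h4 : ((a - b) * t) ^ 2 + (a + b) ^ 2 ≠ 0 := by positivity
  -- `cos` and `sin` of the angle with half-angle tangent `(a + b) / ((a - b) * t)`
  have hc : (1 - ((a + b) / ((a - b) * t)) ^ 2) / (1 + ((a + b) / ((a - b) * t)) ^ 2) =
      (((a - b) * t) ^ 2 - (a + b) ^ 2) / (((a - b) * t) ^ 2 + (a + b) ^ 2) := by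
    have h5 : 1 + ((a + b) / ((a - b) * t)) ^ 2 ≠ 0 := by positivity
    rw [div_eq_div_iff h5 h4]
    field_simp
  have hs : 2 * ((a + b) / ((a - b) * t)) / (1 + ((a + b) / ((a - b) * t)) ^ 2) =
      2 * (a + b) * ((a - b) * t) / (((a - b) * t) ^ 2 + (a + b) ^ 2) := by
    have h5 : 1 + ((a + b) / ((a - b) * t)) ^ 2 ≠ 0 := by positivity
    rw [div_eq_div_iff h5 h4]
    field_simp
  rw [dhR, hc, hs]
  -- a single letter for the denominator keeps the normal forms below small
  generalize hD : ((a - b) * t) ^ 2 + (a + b) ^ 2 = D at h4 ⊢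
  ext i j
  fin_cases i <;> fin_cases j <;>
    simp [dhR, dhT, Matrix.mul_apply, Fin.sum_univ_four] <;>
    field_simp <;> (try rw [← hD]) <;> ring

/-- Loop closure condition of the Bennett mechanism:
`T(a₁)·R(t₁₂)·T(a₂)·R(t₂₃)·T(a₁)·R(−t₁₂)·T(a₂)·R(−t₂₃) = I₄`
under the transmission relation `t₁₂ = (a₁ + a₂)/((a₁ − a₂)·t₂₃)`. -/
theorem bennett_loop_closure (k a₁ a₂ t₂₃ : ℝ) (ha : a₁ ≠ a₂) (ht : t₂₃ ≠ 0) :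
    dhT k a₁ * dhR ((a₁ + a₂) / ((a₁ - a₂) * t₂₃)) * dhT k a₂ * dhR t₂₃ *
      dhT k a₁ * dhR (-((a₁ + a₂) / ((a₁ - a₂) * t₂₃))) * dhT k a₂ * dhR (-t₂₃) = 1 := by
  have hR := dhR_mul_dhR_neg
  have hT := dhT_neg_mul_dhT k
  rw [half_loop k a₁ a₂ t₂₃ ha ht]
  generalize (a₁ + a₂) / ((a₁ - a₂) * t₂₃) = u
  calc
    _ = dhR t₂₃ * (dhT k (-a₂) * (dhR u * (dhT k (-a₁) * dhT k a₁) * dhR (-u)) * dhT k a₂) *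
          dhR (-t₂₃) := by simp only [Matrix.mul_assoc]
    _ = 1 := by simp only [hT, hR, Matrix.mul_one]
end

section
/- For the family (C) parameter choice μ₂₃ = μ₁₄, μ₃₄ = μ₁₂, μ̄₁₄ = s·μ₁₂, μ̄₁₂ = s·μ₁₄, μ̄₂₃ = s·μ₁₂, μ̄₃₄ = s·μ₁₄ with s ∈ {−1, +1}, the four 'squared side-length' conditions ‖P₁₄−P₁₂‖² = ‖P̄₁₄−P̄₁₂‖², ‖P₁₂−P₂₃‖² = ‖P̄₁₂−P̄₂₃‖², ‖P₂₃−P₃₄‖² = ‖P̄₂₃−P̄₃₄‖², ‖P₃₄−P₁₄‖² = ‖P̄₃₄−P̄₁₄‖² are fulfilled identically in the motion parameters τ and τ̄, where P_{i,j} = F_{i,j}(τ) + μ_{i,j}·r_{i,j}(τ) and P̄_{i,j} = F_{i,j}(τ̄) + μ̄_{i,j}·r_{i,j}(τ̄) are points on the axes of two Bennett loops with identical design parameters a₁, a₂, k. -/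
/-!
The squared distance between `F + μ r` and `F' + ν r'` on two consecutive axes of a Bennett loop is
a quantity that depends neither on the motion parameter nor on the order of `μ` and `ν`:
if `d = k sin α` is the distance of the axes and `α` their twist angle, it equals
`d² + μ² + ν² - 2 μ ν cos α` (`adjacentSq`), because `F`, `F'` are the feet of the common normal.

For the first three sides this is so since consecutive frames differ by the factor
`dhR t * dhT k a`, and all frames act by Euclidean isometries (`IsRigid`), so that the distance may
be measured in the frame of the first axis (`sqNorm_step`). The fourth side joins the two ends of
the chain; there the relation between the two rotation angles makes the loop close
(`sqNorm_M34_M14`).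

For the family at hand the second loop arises from the first by swapping the two offsets along each
side and multiplying both by `s`, and `s² = 1`, so `adjacentSq` does not change.
-/

open Matrix

/-- Transformation matrices `M_{i,j}(τ)` of the axes of a Bennett loop, with
`t₁₂ = (a₁ + a₂)/((a₁ − a₂)·τ)` and `t₂₃ = τ`; the axis `r₁₄` is the `x`-axis of
the fixed frame, i.e. `M₁₄ = I₄`. -/
noncomputable def bennettM14 (k a₁ a₂ τ : ℝ) : Matrix (Fin 4) (Fin 4) ℝ := 1

noncomputable def bennettM12 (k a₁ a₂ τ : ℝ) : Matrix (Fin 4) (Fin 4) ℝ := dhT k a₁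

noncomputable def bennettM23 (k a₁ a₂ τ : ℝ) : Matrix (Fin 4) (Fin 4) ℝ :=
  dhT k a₁ * dhR ((a₁ + a₂) / ((a₁ - a₂) * τ)) * dhT k a₂

noncomputable def bennettM34 (k a₁ a₂ τ : ℝ) : Matrix (Fin 4) (Fin 4) ℝ :=
  dhT k a₁ * dhR ((a₁ + a₂) / ((a₁ - a₂) * τ)) * dhT k a₂ * dhR τ * dhT k a₁

/-- The point `F_{i,j}` of the axis `r_{i,j}`: image of `(1,0,0,0)ᵀ` under `M_{i,j}`. -/
noncomputable def axisPoint (M : Matrix (Fin 4) (Fin 4) ℝ) : Fin 3 → ℝ :=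
  fun i => M.mulVec ![1, 0, 0, 0] i.succ

/-- The unit direction `r_{i,j}` of the axis `r_{i,j}`: image of `(0,1,0,0)ᵀ` under `M_{i,j}`. -/
noncomputable def axisDir (M : Matrix (Fin 4) (Fin 4) ℝ) : Fin 3 → ℝ :=
  fun i => M.mulVec ![0, 1, 0, 0] i.succ

/-- Point `P = F + μ·r` on an axis. -/
noncomputable def axisPt (M : Matrix (Fin 4) (Fin 4) ℝ) (μ : ℝ) : Fin 3 → ℝ :=
  axisPoint M + μ • axisDir M

/-- Squared Euclidean length of a vector in `ℝ³`. -/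
noncomputable def sqNorm (v : Fin 3 → ℝ) : ℝ := ∑ i, (v i) ^ 2

/-- A `4 × 4` matrix acts on homogeneous coordinates (homogeneous coordinate first) as a Euclidean
isometry of `ℝ³`: it keeps the homogeneous coordinate, and keeps the length of
differences of points, i.e. of vectors with homogeneous coordinate `0`. -/
def IsRigid (M : Matrix (Fin 4) (Fin 4) ℝ) : Prop :=
  ∀ v : Fin 4 → ℝ, M.mulVec v 0 = v 0 ∧
    (v 0 = 0 → ∑ i : Fin 3, (M.mulVec v i.succ) ^ 2 = ∑ i : Fin 3, (v i.succ) ^ 2)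

/-- The squared distance of two points with offsets `μ`, `ν` from the feet of the common normal of
two axes with twist angle `α` and distance `k * sin α`, where `a = tan (α / 2)`. -/
noncomputable def adjacentSq (k a μ ν : ℝ) : ℝ :=
  (k * (2 * a / (1 + a ^ 2))) ^ 2 + μ ^ 2 + ν ^ 2 - 2 * μ * ν * ((1 - a ^ 2) / (1 + a ^ 2))

theorem IsRigid.mul {M N : Matrix (Fin 4) (Fin 4) ℝ} (hM : IsRigid M) (hN : IsRigid N) :
    IsRigid (M * N) := by
  intro v
  rw [← Matrix.mulVec_mulVec]
  refine ⟨by rw [(hM _).1, (hN v).1], fun hv => ?_⟩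
  rw [(hM _).2 (by rw [(hN v).1, hv]), (hN v).2 hv]

theorem sq_cos_add_sq_sin (t : ℝ) :
    ((1 - t ^ 2) / (1 + t ^ 2)) ^ 2 + (2 * t / (1 + t ^ 2)) ^ 2 = 1 := by
  have h : 1 + t ^ 2 ≠ 0 := by positivity
  field_simp
  ring

theorem isRigid_dhR (t : ℝ) : IsRigid (dhR t) := by
  intro v
  have h := sq_cos_add_sq_sin t
  simp only [dhR, Matrix.mulVec, dotProduct, Fin.sum_univ_succ, Fin.sum_univ_zero]
  simp
  generalize (1 - t ^ 2) / (1 + t ^ 2) = c at *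
  generalize 2 * t / (1 + t ^ 2) = s at *
  intro _
  linear_combination (v 2 ^ 2 + v 3 ^ 2) * h

theorem isRigid_dhT (k a : ℝ) : IsRigid (dhT k a) := by
  intro v
  have h := sq_cos_add_sq_sin a
  simp only [dhT, Matrix.mulVec, dotProduct, Fin.sum_univ_succ, Fin.sum_univ_zero]
  simp
  generalize (1 - a ^ 2) / (1 + a ^ 2) = c at *
  generalize 2 * a / (1 + a ^ 2) = s at *
  intro hv
  rw [hv]
  linear_combination (v 1 ^ 2 + v 2 ^ 2) * h

theorem axisPt_apply (M : Matrix (Fin 4) (Fin 4) ℝ) (μ : ℝ) (i : Fin 3) :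
    axisPt M μ i = M.mulVec ![1, μ, 0, 0] i.succ := by
  simp [axisPt, axisPoint, axisDir, Matrix.mulVec, dotProduct, Fin.sum_univ_succ]
  ring

/-- Distances may be measured in the frame `M`, where the axis of `M` is the `x`-axis. -/
theorem sqNorm_axisPt_mul {M : Matrix (Fin 4) (Fin 4) ℝ} (hM : IsRigid M)
    (N : Matrix (Fin 4) (Fin 4) ℝ) (hN : IsRigid N) (μ ν : ℝ) :
    sqNorm (axisPt M μ - axisPt (M * N) ν) = sqNorm (axisPt 1 μ - axisPt N ν) := by
  have h := (hM (![1, μ, 0, 0] - N.mulVec ![1, ν, 0, 0])).2 (by simp [(hN _).1])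
  simpa only [sqNorm, Pi.sub_apply, axisPt_apply, ← Matrix.mulVec_mulVec, Matrix.mulVec_sub,
    Matrix.one_mulVec] using h

theorem sqNorm_one_dhR_mul_dhT (k a t μ ν : ℝ) :
    sqNorm (axisPt 1 μ - axisPt (dhR t * dhT k a) ν) = adjacentSq k a μ ν := by
  have h := sq_cos_add_sq_sin a
  have h' := sq_cos_add_sq_sin t
  simp only [sqNorm, Pi.sub_apply, axisPt_apply, ← Matrix.mulVec_mulVec, Matrix.one_mulVec,
    adjacentSq]
  simp [dhT, dhR, Matrix.mulVec, dotProduct, Fin.sum_univ_succ]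
  generalize (1 - a ^ 2) / (1 + a ^ 2) = c at *
  generalize 2 * a / (1 + a ^ 2) = s at *
  generalize (1 - t ^ 2) / (1 + t ^ 2) = c' at *
  generalize 2 * t / (1 + t ^ 2) = s' at *
  linear_combination ν ^ 2 * h + ((k * s) ^ 2 + (ν * s) ^ 2) * h'

theorem sqNorm_step {M : Matrix (Fin 4) (Fin 4) ℝ} (hM : IsRigid M) (k a t μ ν : ℝ) :
    sqNorm (axisPt M μ - axisPt (M * dhR t * dhT k a) ν) = adjacentSq k a μ ν := by
  rw [Matrix.mul_assoc, sqNorm_axisPt_mul hM _ ((isRigid_dhR t).mul (isRigid_dhT k a)),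
    sqNorm_one_dhR_mul_dhT]

theorem sqNorm_M14_M12 (k a₁ a₂ τ μ ν : ℝ) :
    sqNorm (axisPt (bennettM14 k a₁ a₂ τ) μ - axisPt (bennettM12 k a₁ a₂ τ) ν) =
      adjacentSq k a₁ μ ν := by
  -- The first side is a step from the identity frame with rotation angle `0`.
  have h : dhR 0 = 1 := by
    ext i j
    fin_cases i <;> fin_cases j <;> simp [dhR]
  have := sqNorm_one_dhR_mul_dhT k a₁ 0 μ ν
  rwa [h, one_mul] at this

/-- Closure of the loop: the last and the first axis have the same distance, angle and feet of the
common normal as two consecutive axes with half-angle parameter `a₂`. -/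
theorem sqNorm_M34_M14 (k a₁ a₂ τ μ ν : ℝ) (ha : a₁ ≠ a₂) (hτ : τ ≠ 0) :
    sqNorm (axisPt (bennettM34 k a₁ a₂ τ) ν - axisPt (bennettM14 k a₁ a₂ τ) μ) =
      adjacentSq k a₂ ν μ := by
  have hq : a₁ - a₂ ≠ 0 := sub_ne_zero.mpr ha
  have hD : ((a₁ - a₂) * τ) ^ 2 + (a₁ + a₂) ^ 2 ≠ 0 := by positivity
  have h1 : 1 + a₁ ^ 2 ≠ 0 := by positivity
  have h2 : 1 + a₂ ^ 2 ≠ 0 := by positivity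
  have h3 : 1 + τ ^ 2 ≠ 0 := by positivity
  have hD' : 1 + ((a₁ + a₂) / ((a₁ - a₂) * τ)) ^ 2 ≠ 0 := by positivity
  -- The sine and cosine of the first rotation angle, with the inner fraction cleared.
  have hc : (1 - ((a₁ + a₂) / ((a₁ - a₂) * τ)) ^ 2) / (1 + ((a₁ + a₂) / ((a₁ - a₂) * τ)) ^ 2)
      = (((a₁ - a₂) * τ) ^ 2 - (a₁ + a₂) ^ 2) / (((a₁ - a₂) * τ) ^ 2 + (a₁ + a₂) ^ 2) := by
    rw [div_eq_div_iff hD' hD]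
    field_simp
  have hs : 2 * ((a₁ + a₂) / ((a₁ - a₂) * τ)) / (1 + ((a₁ + a₂) / ((a₁ - a₂) * τ)) ^ 2)
      = 2 * (a₁ + a₂) * ((a₁ - a₂) * τ) / (((a₁ - a₂) * τ) ^ 2 + (a₁ + a₂) ^ 2) := by
    rw [div_eq_div_iff hD' hD]
    field_simp
  simp only [sqNorm, Pi.sub_apply, axisPt_apply, ← Matrix.mulVec_mulVec, Matrix.one_mulVec,
    adjacentSq, bennettM34, bennettM14]
  simp [dhT, dhR, Matrix.mulVec, dotProduct, Fin.sum_univ_succ]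
  rw [hc, hs]
  field_simp
  ring

theorem adjacentSq_swap (k a μ ν s : ℝ) (hs : s = 1 ∨ s = -1) :
    adjacentSq k a (s * ν) (s * μ) = adjacentSq k a μ ν := by
  rcases hs with rfl | rfl <;> (unfold adjacentSq; ring)

/-- For the family (C) parameter choice, the four squared side-length conditions of
Eq. (3.11) hold identically in the motion parameters `τ` and `τ̄`. -/
theorem familyC_side_length_conditions (k a₁ a₂ μ₁₄ μ₁₂ s : ℝ)
    (ha : a₁ ≠ a₂) (hs : s = 1 ∨ s = -1) (τ τ' : ℝ) (hτ : τ ≠ 0) (hτ' : τ' ≠ 0) :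
    -- Bennett `B` with parameters μ₂₃ = μ₁₄, μ₃₄ = μ₁₂ at motion parameter τ
    let P₁₄ := axisPt (bennettM14 k a₁ a₂ τ) μ₁₄
    let P₁₂ := axisPt (bennettM12 k a₁ a₂ τ) μ₁₂
    let P₂₃ := axisPt (bennettM23 k a₁ a₂ τ) μ₁₄
    let P₃₄ := axisPt (bennettM34 k a₁ a₂ τ) μ₁₂
    -- Bennett `B̄` with parameters μ̄₁₄ = s·μ₁₂, μ̄₁₂ = s·μ₁₄, μ̄₂₃ = s·μ₁₂,
    -- μ̄₃₄ = s·μ₁₄ at motion parameter τ̄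
    let Q₁₄ := axisPt (bennettM14 k a₁ a₂ τ') (s * μ₁₂)
    let Q₁₂ := axisPt (bennettM12 k a₁ a₂ τ') (s * μ₁₄)
    let Q₂₃ := axisPt (bennettM23 k a₁ a₂ τ') (s * μ₁₂)
    let Q₃₄ := axisPt (bennettM34 k a₁ a₂ τ') (s * μ₁₄)
    sqNorm (P₁₄ - P₁₂) = sqNorm (Q₁₄ - Q₁₂) ∧
      sqNorm (P₁₂ - P₂₃) = sqNorm (Q₁₂ - Q₂₃) ∧
      sqNorm (P₂₃ - P₃₄) = sqNorm (Q₂₃ - Q₃₄) ∧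
      sqNorm (P₃₄ - P₁₄) = sqNorm (Q₃₄ - Q₁₄) := by
  intro P₁₄ P₁₂ P₂₃ P₃₄ Q₁₄ Q₁₂ Q₂₃ Q₃₄
  have h12 (σ : ℝ) : IsRigid (bennettM12 k a₁ a₂ σ) := isRigid_dhT k a₁
  have h23 (σ : ℝ) : IsRigid (bennettM23 k a₁ a₂ σ) :=
    ((isRigid_dhT k a₁).mul (isRigid_dhR _)).mul (isRigid_dhT k a₂)
  have side2 (σ μ ν : ℝ) : sqNorm (axisPt (bennettM12 k a₁ a₂ σ) μ -
      axisPt (bennettM23 k a₁ a₂ σ) ν) = adjacentSq k a₂ μ ν :=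
    sqNorm_step (h12 σ) k a₂ _ μ ν
  have side3 (σ μ ν : ℝ) : sqNorm (axisPt (bennettM23 k a₁ a₂ σ) μ -
      axisPt (bennettM34 k a₁ a₂ σ) ν) = adjacentSq k a₁ μ ν :=
    sqNorm_step (h23 σ) k a₁ _ μ ν
  refine ⟨?_, ?_, ?_, ?_⟩
  · simp only [P₁₄, P₁₂, Q₁₄, Q₁₂, sqNorm_M14_M12, adjacentSq_swap _ _ _ _ _ hs]
  · simp only [P₁₂, P₂₃, Q₁₂, Q₂₃, side2, adjacentSq_swap _ _ _ _ _ hs]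
  · simp only [P₂₃, P₃₄, Q₂₃, Q₃₄, side3, adjacentSq_swap _ _ _ _ _ hs]
  · simp only [P₃₄, P₁₄, Q₃₄, Q₁₄, sqNorm_M34_M14 _ _ _ _ _ _ ha hτ,
      sqNorm_M34_M14 _ _ _ _ _ _ ha hτ', adjacentSq_swap _ _ _ _ _ hs]
end
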